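/- (Reverse Direction of Interpolation Between Default Extensions.) Let ⟨W₁, D₁⟩ and ⟨W₂, D₂⟩ be propositional default theories over a finite variable set such that no variable occurring in W₂ or in a consequent of a default of D₂ occurs in W₁ or in any prerequisite, justification or consequent of a default of D₁. Let φ be a formula with φ ∈ 𝓛(W₂ ∪ D₂). Suppose there exist: a formula γ ∈ 𝓛(W₁ ∪ D₁) ∩ 𝓛(W₂ ∪ D₂); an extension E₁ of ⟨W₁, D₁⟩ such that γ is logically equivalent to the set of formulas in 𝓛(W₁ ∪ D₁) ∩ 𝓛(W₂ ∪ D₂) entailed by E₁; and an extension E₂ of ⟨W₂ ∪ {γ}, D₂⟩ with E₂ ⊨ φ. Then Cn(E₁ ∪ E₂) is an extension of ⟨W₁ ∪ W₂, D₁ ∪ D₂⟩ containing φ; in particular ⟨W₁ ∪ W₂, D₁ ∪ D₂⟩ has an extension in which φ holds. -/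

import Mathlib

namespace NMR

/-- Propositional formulas over a variable type `V`. -/
inductive PropForm (V : Type*) : Type _ where
  | var : V → PropForm V
  | tru : PropForm V
  | fls : PropForm V
  | neg : PropForm V → PropForm V
  | conj : PropForm V → PropForm V → PropForm V
  | disj : PropForm V → PropForm V → PropForm V
  | impl : PropForm V → PropForm V → PropForm V

variable {V : Type*}

/-- Truth value of a formula under a valuation. -/
def PropForm.eval (ν : V → Bool) : PropForm V → Bool
  | .var v => ν v
  | .tru => true
  | .fls => false
  | .neg φ => !(φ.eval ν)
  | .conj φ ψ => φ.eval ν && ψ.eval ν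
  | .disj φ ψ => φ.eval ν || ψ.eval ν
  | .impl φ ψ => !(φ.eval ν) || ψ.eval ν

/-- The set of variables occurring in a formula. -/
def PropForm.vars : PropForm V → Set V
  | .var v => {v}
  | .tru => ∅
  | .fls => ∅
  | .neg φ => φ.vars
  | .conj φ ψ => φ.vars ∪ ψ.vars
  | .disj φ ψ => φ.vars ∪ ψ.vars
  | .impl φ ψ => φ.vars ∪ ψ.vars

/-- `ν ⊨ φ`. -/
def Sat (ν : V → Bool) (φ : PropForm V) : Prop := φ.eval ν = true

/-- `ν ⊨ T` for a set of formulas. -/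
def SatSet (ν : V → Bool) (T : Set (PropForm V)) : Prop := ∀ φ ∈ T, Sat ν φ

/-- `T ⊨ φ`. -/
def Entails (T : Set (PropForm V)) (φ : PropForm V) : Prop :=
  ∀ ν : V → Bool, SatSet ν T → Sat ν φ

/-- `T ⊨ Γ` for a set `Γ`. -/
def EntailsSet (T Γ : Set (PropForm V)) : Prop := ∀ φ ∈ Γ, Entails T φ

/-- A tautology is satisfied by every valuation. -/
def Tautology (φ : PropForm V) : Prop := ∀ ν : V → Bool, Sat ν φ

/-- `L(T)`: the set of variables occurring in a set of formulas. -/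
def varsOf (T : Set (PropForm V)) : Set V := ⋃ φ ∈ T, φ.vars

/-- `𝓛(S)`: the set of formulas all of whose variables lie in `S`. -/
def FormsOver (S : Set V) : Set (PropForm V) := {φ | φ.vars ⊆ S}

/-- `Cn^S(T)`: the formulas in `𝓛(S)` entailed by `T`. -/
def Cn (S : Set V) (T : Set (PropForm V)) : Set (PropForm V) :=
  {φ | φ.vars ⊆ S ∧ Entails T φ}

/-- Two sets of formulas are logically equivalent iff they have the same models. -/
def EquivTheories (T T' : Set (PropForm V)) : Prop :=
  ∀ ν : V → Bool, SatSet ν T ↔ SatSet ν T'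

/-- A Reiter default: prerequisite, a finite nonempty set of justifications,
and a consequent. -/
structure Default (V : Type*) where
  pre : PropForm V
  just : Set (PropForm V)
  just_finite : just.Finite
  just_nonempty : just.Nonempty
  cons : PropForm V

/-- All propositional consequences of `T`. -/
def CnAll (T : Set (PropForm V)) : Set (PropForm V) := {φ | Entails T φ}

/-- The closure conditions defining `Γ(S₀)` for the default theory `⟨W, D⟩`:
`W ⊆ S`, `Cn(S) = S`, and closure under the defaults applicable w.r.t. `S₀`. -/
def DLClosed (W : Set (PropForm V)) (D : Set (Default V)) (S₀ S : Set (PropForm V)) : Prop :=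
  W ⊆ S ∧ CnAll S = S ∧
    ∀ d ∈ D, d.pre ∈ S → (∀ β ∈ d.just, PropForm.neg β ∉ S₀) → d.cons ∈ S

/-- `Γ(S₀)`: the least set satisfying the closure conditions (the intersection
of all such sets, which is itself such a set). -/
def GammaOp (W : Set (PropForm V)) (D : Set (Default V)) (S₀ : Set (PropForm V)) :
    Set (PropForm V) := ⋂₀ {S | DLClosed W D S₀ S}

/-- `E` is an extension of `⟨W, D⟩` iff `Γ(E) = E`. -/
def IsExtension (W : Set (PropForm V)) (D : Set (Default V)) (E : Set (PropForm V)) : Prop :=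
  GammaOp W D E = E

/-- Cautious entailment `W |~_D φ`. -/
def Cautious (W : Set (PropForm V)) (D : Set (Default V)) (φ : PropForm V) : Prop :=
  ∀ E : Set (PropForm V), IsExtension W D E → φ ∈ E

/-- Brave entailment `W |~^b_D φ`. -/
def Brave (W : Set (PropForm V)) (D : Set (Default V)) (φ : PropForm V) : Prop :=
  ∃ E : Set (PropForm V), IsExtension W D E ∧ φ ∈ E

/-- `L(D)`: the variables occurring in prerequisites, justifications or
consequents of defaults in `D`. -/
def varsD (D : Set (Default V)) : Set V :=
  ⋃ d ∈ D, (d.pre.vars ∪ (⋃ β ∈ d.just, PropForm.vars β) ∪ d.cons.vars)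

/-- Variables occurring in consequents of defaults of `D`. -/
def consVars (D : Set (Default V)) : Set V := ⋃ d ∈ D, (Default.cons d).vars

/-! Helper lemmas. -/

theorem eval_congr' {V : Type*} {ν μ : V → Bool} : ∀ (φ : PropForm V),
    (∀ v ∈ φ.vars, ν v = μ v) → φ.eval ν = φ.eval μ
  | .var v, h => h v rfl
  | .tru, _ => rfl
  | .fls, _ => rfl
  | .neg φ, h => by
      simp only [PropForm.eval]
      rw [eval_congr' φ h]
  | .conj φ ψ, h => by
      simp only [PropForm.eval]
      rw [eval_congr' φ (fun v hv => h v (Or.inl hv)), eval_congr' ψ (fun v hv => h v (Or.inr hv))]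
  | .disj φ ψ, h => by
      simp only [PropForm.eval]
      rw [eval_congr' φ (fun v hv => h v (Or.inl hv)), eval_congr' ψ (fun v hv => h v (Or.inr hv))]
  | .impl φ ψ, h => by
      simp only [PropForm.eval]
      rw [eval_congr' φ (fun v hv => h v (Or.inl hv)), eval_congr' ψ (fun v hv => h v (Or.inr hv))]

theorem sat_congr' {V : Type*} {ν μ : V → Bool} {φ : PropForm V}
    (h : ∀ v ∈ φ.vars, ν v = μ v) : Sat ν φ ↔ Sat μ φ := by
  unfold Sat
  rw [eval_congr' φ h]

theorem sat_neg' {V : Type*} {ν : V → Bool} {φ : PropForm V} :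
    Sat ν (PropForm.neg φ) ↔ ¬ Sat ν φ := by
  simp [Sat, PropForm.eval]

theorem exists_char {V : Type*} [Finite V] (S : Set V) (ν : V → Bool) :
    ∃ χ : PropForm V, χ.vars ⊆ S ∧ ∀ μ : V → Bool, Sat μ χ ↔ ∀ v ∈ S, μ v = ν v := by
  induction S, S.toFinite using Set.Finite.induction_on with
  | empty => exact ⟨.tru, by simp [PropForm.vars], by simp [Sat, PropForm.eval]⟩
  | @insert a S _ _ ih =>
    obtain ⟨χ, h1, h2⟩ := ih
    by_cases ha : ν a = true
    · refine ⟨.conj (.var a) χ, ?_, fun μ => ?_⟩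
      · simp only [PropForm.vars]
        intro v hv
        rcases hv with hv | hv
        · exact Or.inl hv
        · exact Or.inr (h1 hv)
      · have := h2 μ
        simp only [Sat] at this
        simp [Sat, PropForm.eval, ha, this]
    · refine ⟨.conj (.neg (.var a)) χ, ?_, fun μ => ?_⟩
      · simp only [PropForm.vars]
        intro v hv
        rcases hv with hv | hv
        · exact Or.inl hv
        · exact Or.inr (h1 hv)
      · have := h2 μ
        simp only [Sat] at this
        simp [Sat, PropForm.eval, ha, this]

theorem subset_cnAll {V : Type*} (T : Set (PropForm V)) : T ⊆ CnAll T :=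
  fun _ h _ hν => hν _ h

theorem cnAll_idem {V : Type*} (T : Set (PropForm V)) : CnAll (CnAll T) = CnAll T :=
  Set.Subset.antisymm (fun _ h ν hν => h ν (fun _ hψ => hψ ν hν)) (subset_cnAll _)

theorem cnAll_mono' {V : Type*} {S T : Set (PropForm V)} (h : S ⊆ T) : CnAll S ⊆ CnAll T :=
  fun _ hψ ν hν => hψ ν (fun x hx => hν x (h hx))

theorem ext_min {V : Type*} {W : Set (PropForm V)} {D : Set (Default V)}
    {E S : Set (PropForm V)} (hE : IsExtension W D E) (hS : DLClosed W D E S) : E ⊆ S := by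
  intro x hx
  rw [← hE] at hx
  exact hx S hS

theorem ext_closed {V : Type*} {W : Set (PropForm V)} {D : Set (Default V)}
    {E : Set (PropForm V)} (hE : IsExtension W D E) : DLClosed W D E E := by
  have key : DLClosed W D E (GammaOp W D E) := by
    refine ⟨fun x hx S hS => hS.1 hx, ?_, fun d hd hp hj S hS => hS.2.2 d hd (hp S hS) hj⟩
    refine Set.Subset.antisymm (fun x hx S hS => ?_) (subset_cnAll _)
    rw [← hS.2.1]
    exact cnAll_mono' (Set.sInter_subset_of_mem hS) hx
  have h2 : GammaOp W D E = E := hE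
  rw [h2] at key
  exact key

theorem ext_base {V : Type*} {W : Set (PropForm V)} {D : Set (Default V)}
    {E B : Set (PropForm V)} (hE : IsExtension W D E) (hB : B ⊆ E) (hW : W ⊆ B)
    (hD : ∀ d ∈ D, d.cons ∈ E → d.cons ∈ B) : E ⊆ CnAll B := by
  have hc := ext_closed hE
  refine ext_min hE ⟨fun x hx => subset_cnAll _ (hW hx), cnAll_idem _, fun d hd hp hj => ?_⟩
  have hp' : d.pre ∈ E := by
    rw [← hc.2.1]
    exact cnAll_mono' hB hp
  exact subset_cnAll _ (hD d hd (hc.2.2 d hd hp' hj))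

theorem ext_incons {V : Type*} {W : Set (PropForm V)} {D : Set (Default V)}
    {E : Set (PropForm V)} (hE : IsExtension W D E) (h : ∀ ν, ¬ SatSet ν E) :
    ∀ ν, ¬ SatSet ν W := by
  have hc := ext_closed hE
  have hall : ∀ ψ, ψ ∈ E := fun ψ => by
    rw [← hc.2.1]
    exact fun ν hν => absurd hν (h ν)
  have hsub : E ⊆ CnAll W := by
    refine ext_min hE ⟨subset_cnAll _, cnAll_idem _, fun d _ _ hj => ?_⟩
    obtain ⟨β, hβ⟩ := d.just_nonempty
    exact absurd (hall _) (hj β hβ)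
  intro ν hν
  exact h ν (fun ψ hψ => hsub hψ ν hν)

/-- Reverse Direction of Interpolation Between Default Extensions. -/
theorem reverse_interpolation_between_extensions {V : Type*} [Finite V]
    (W₁ W₂ : Set (PropForm V)) (D₁ D₂ : Set (Default V)) (φ : PropForm V)
    (hdisj : (varsOf W₂ ∪ consVars D₂) ∩ (varsOf W₁ ∪ varsD D₁) = ∅)
    (hφ : φ.vars ⊆ varsOf W₂ ∪ varsD D₂)
    (γ : PropForm V)
    (hγ : γ.vars ⊆ (varsOf W₁ ∪ varsD D₁) ∩ (varsOf W₂ ∪ varsD D₂))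
    (E₁ : Set (PropForm V)) (hE₁ : IsExtension W₁ D₁ E₁)
    (hequiv : ∀ ν : V → Bool, Sat ν γ ↔
      SatSet ν {ψ | ψ.vars ⊆ (varsOf W₁ ∪ varsD D₁) ∩ (varsOf W₂ ∪ varsD D₂) ∧
        Entails E₁ ψ})
    (E₂ : Set (PropForm V)) (hE₂ : IsExtension (W₂ ∪ {γ}) D₂ E₂)
    (hE₂φ : Entails E₂ φ) :
    (IsExtension (W₁ ∪ W₂) (D₁ ∪ D₂) (CnAll (E₁ ∪ E₂)) ∧ φ ∈ CnAll (E₁ ∪ E₂)) ∧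
    ∃ E : Set (PropForm V), IsExtension (W₁ ∪ W₂) (D₁ ∪ D₂) E ∧ φ ∈ E := by
  classical
  set L1 := varsOf W₁ ∪ varsD D₁ with hL1
  set L2 := varsOf W₂ ∪ varsD D₂ with hL2
  set C2 := varsOf W₂ ∪ consVars D₂ with hC2
  have hdis : ∀ v, v ∈ C2 → v ∈ L1 → False := fun v h1 h2 => by
    have : v ∈ C2 ∩ L1 := ⟨h1, h2⟩
    rw [hdisj] at this
    exact this
  -- variable bookkeeping
  have hWL : ∀ (W : Set (PropForm V)), ∀ ψ ∈ W, ψ.vars ⊆ varsOf W :=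
    fun W ψ hψ v hv => Set.mem_biUnion hψ hv
  have hpreL : ∀ (D : Set (Default V)), ∀ d ∈ D, d.pre.vars ⊆ varsD D :=
    fun D d hd v hv => Set.mem_biUnion hd (Or.inl (Or.inl hv))
  have hjustL : ∀ (D : Set (Default V)), ∀ d ∈ D, ∀ β ∈ d.just,
      (PropForm.neg β).vars ⊆ varsD D :=
    fun D d hd β hβ v hv => Set.mem_biUnion hd (Or.inl (Or.inr (Set.mem_biUnion hβ hv)))
  have hconsL : ∀ (D : Set (Default V)), ∀ d ∈ D, d.cons.vars ⊆ varsD D :=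
    fun D d hd v hv => Set.mem_biUnion hd (Or.inr hv)
  have hconsC : ∀ d ∈ D₂, d.cons.vars ⊆ C2 :=
    fun d hd v hv => Or.inr (Set.mem_biUnion hd hv)
  have hCL : C2 ⊆ L2 := by
    rintro v (hv | hv)
    · exact Or.inl hv
    · obtain ⟨d, hd, hv⟩ := Set.mem_iUnion₂.1 hv
      exact Or.inr (hconsL D₂ d hd hv)
  have c1 := ext_closed hE₁
  have c2 := ext_closed hE₂
  have hγE₁ : γ ∈ E₁ := by
    rw [← c1.2.1]
    intro ν hν
    exact (hequiv ν).2 (fun ψ hψ => hψ.2 ν hν)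
  -- bases
  set A1 : Set (PropForm V) := {ψ | ψ ∈ E₁ ∧ ψ.vars ⊆ L1} with hA1
  set A2 : Set (PropForm V) := {ψ | ψ ∈ E₂ ∧ ψ.vars ⊆ C2} with hA2
  have b1 : E₁ ⊆ CnAll A1 := by
    apply ext_base hE₁ (fun x hx => hx.1)
    · exact fun x hx => ⟨c1.1 hx, fun v hv => Or.inl (hWL _ x hx hv)⟩
    · exact fun d hd hc => ⟨hc, fun v hv => Or.inr (hconsL _ d hd hv)⟩
  have b2 : E₂ ⊆ CnAll (A2 ∪ {γ}) := by
    apply ext_base hE₂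
    · rintro x (hx | hx)
      · exact hx.1
      · exact c2.1 (Or.inr hx)
    · rintro x (hx | hx)
      · exact Or.inl ⟨c2.1 (Or.inl hx), fun v hv => Or.inl (hWL _ x hx hv)⟩
      · exact Or.inr hx
    · exact fun d hd hc => Or.inl ⟨hc, hconsC d hd⟩
  have sat1 : ∀ ν, SatSet ν A1 → SatSet ν E₁ := fun ν h ψ hψ => b1 hψ ν h
  have sat2 : ∀ ν, SatSet ν A2 → Sat ν γ → SatSet ν E₂ := fun ν h hg ψ hψ =>
    b2 hψ ν (by
      rintro x (hx | hx)
      · exact h x hx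
      · rw [hx]; exact hg)
  -- merging of valuations
  let mrg : (V → Bool) → (V → Bool) → V → Bool := fun ν μ v => if v ∈ L1 then ν v else μ v
  have m1 : ∀ ν μ, ∀ ψ : PropForm V, ψ.vars ⊆ L1 → (Sat (mrg ν μ) ψ ↔ Sat ν ψ) :=
    fun ν μ ψ h => sat_congr' (fun v hv => by simp [mrg, h hv])
  have m2 : ∀ ν μ, ∀ ψ : PropForm V, ψ.vars ⊆ C2 → (Sat (mrg ν μ) ψ ↔ Sat μ ψ) :=
    fun ν μ ψ h => sat_congr' (fun v hv => by
      have : v ∉ L1 := fun h' => hdis v (h hv) h'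
      simp [mrg, this])
  have mE1 : ∀ ν μ, SatSet ν E₁ → SatSet (mrg ν μ) E₁ := fun ν μ h =>
    sat1 _ (fun ψ hψ => (m1 ν μ ψ hψ.2).2 (h ψ hψ.1))
  have mA2 : ∀ ν μ, SatSet μ A2 → SatSet (mrg ν μ) A2 := fun ν μ h ψ hψ =>
    (m2 ν μ ψ hψ.2).2 (h ψ hψ)
  have mE : ∀ ν μ, SatSet ν E₁ → SatSet μ A2 → SatSet (mrg ν μ) (E₁ ∪ E₂) := by
    intro ν μ h1 h2 ψ hψ
    have h3 := mE1 ν μ h1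
    rcases hψ with hψ | hψ
    · exact h3 ψ hψ
    · exact sat2 _ (mA2 ν μ h2) (h3 γ hγE₁) ψ hψ
  -- conservativity over L2
  have cons2 : ∀ ψ : PropForm V, ψ.vars ⊆ L2 → ψ ∈ CnAll (E₁ ∪ E₂) → ψ ∈ E₂ := by
    intro ψ hψ hE
    rw [← c2.2.1]
    intro ν hν
    obtain ⟨χ, hχ1, hχ2⟩ := exists_char (L1 ∩ L2) ν
    have hγν : Sat ν γ := hν γ (c2.1 (Or.inr rfl))
    obtain ⟨μ, hμ, hag⟩ : ∃ μ, SatSet μ E₁ ∧ Sat μ χ := by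
      by_contra hno
      push Not at hno
      have h1 : Sat ν (PropForm.neg χ) :=
        (hequiv ν).1 hγν _ ⟨hχ1, fun μ hμ => sat_neg'.2 (hno μ hμ)⟩
      exact sat_neg'.1 h1 ((hχ2 ν).2 (fun _ _ => rfl))
    rw [hχ2] at hag
    have h4 := hE _ (mE μ ν hμ (fun x hx => hν x hx.1))
    refine (sat_congr' (fun v hv => ?_)).1 h4
    by_cases hv1 : v ∈ L1
    · simp only [mrg, hv1, if_true]
      exact hag v ⟨hv1, hψ hv⟩
    · simp [mrg, hv1]
  have hφE : φ ∈ CnAll (E₁ ∪ E₂) := fun ν hν => hE₂φ ν (fun x hx => hν x (Or.inr hx))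
  suffices hext : IsExtension (W₁ ∪ W₂) (D₁ ∪ D₂) (CnAll (E₁ ∪ E₂)) from
    ⟨⟨hext, hφE⟩, _, hext, hφE⟩
  have sub1 : E₁ ⊆ CnAll (E₁ ∪ E₂) := fun x hx => subset_cnAll _ (Or.inl hx)
  have sub2 : E₂ ⊆ CnAll (E₁ ∪ E₂) := fun x hx => subset_cnAll _ (Or.inr hx)
  by_cases hcon : ∃ μ, SatSet μ A2
  · obtain ⟨μ, hμ⟩ := hcon
    have cons1 : ∀ ψ : PropForm V, ψ.vars ⊆ L1 → ψ ∈ CnAll (E₁ ∪ E₂) → ψ ∈ E₁ := by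
      intro ψ hψ hE
      rw [← c1.2.1]
      intro ν hν
      exact (m1 ν μ ψ hψ).1 (hE _ (mE ν μ hν hμ))
    apply Set.Subset.antisymm
    · intro x hx
      refine hx _ ⟨?_, cnAll_idem _, ?_⟩
      · rintro y (hy | hy)
        · exact sub1 (c1.1 hy)
        · exact sub2 (c2.1 (Or.inl hy))
      · rintro d (hd | hd) hp hj
        · exact sub1 (c1.2.2 d hd (cons1 _ (fun v hv => Or.inr (hpreL _ d hd hv)) hp)
            (fun β hβ h => hj β hβ (sub1 h)))
        · exact sub2 (c2.2.2 d hd (cons2 _ (fun v hv => Or.inr (hpreL _ d hd hv)) hp)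
            (fun β hβ h => hj β hβ (sub2 h)))
    · intro x hx S hS
      have s1 : E₁ ⊆ S := ext_min hE₁ ⟨fun y hy => hS.1 (Or.inl hy), hS.2.1,
        fun d hd hp hj => hS.2.2 d (Or.inl hd) hp (fun β hβ h =>
          hj β hβ (cons1 _ (fun v hv => Or.inr (hjustL _ d hd β hβ hv)) h))⟩
      have s2 : E₂ ⊆ S := by
        refine ext_min hE₂ ⟨?_, hS.2.1,
          fun d hd hp hj => hS.2.2 d (Or.inr hd) hp (fun β hβ h =>
            hj β hβ (cons2 _ (fun v hv => Or.inr (hjustL _ d hd β hβ hv)) h))⟩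
        rintro y (hy | hy)
        · exact hS.1 (Or.inr hy)
        · rw [hy]; exact s1 hγE₁
      rw [← hS.2.1]
      exact cnAll_mono' (Set.union_subset s1 s2) hx
  · push Not at hcon
    have i2 : ∀ ν, ¬ SatSet ν (W₂ ∪ {γ}) :=
      ext_incons hE₂ (fun ν hν => hcon ν (fun x hx => hν x hx.1))
    have iW : ∀ ν, ¬ SatSet ν (W₁ ∪ W₂) := by
      intro ν hν
      by_cases h1 : ∃ μ, SatSet μ E₁
      · obtain ⟨μ, hμ⟩ := h1
        apply i2 (mrg μ ν)
        rintro x (hx | hx)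
        · exact (m2 μ ν x (fun v hv => Or.inl (hWL _ x hx hv))).2 (hν x (Or.inr hx))
        · rw [hx]; exact mE1 μ ν hμ γ hγE₁
      · push Not at h1
        exact ext_incons hE₁ h1 ν (fun x hx => hν x (Or.inl hx))
    apply Set.Subset.antisymm
    · intro x _ ν hν
      exact absurd (fun y hy => hν y (Or.inr hy.1)) (hcon ν)
    · intro x _ S hS
      rw [← hS.2.1]
      intro ν hν
      exact absurd (fun y hy => hν y (hS.1 hy)) (iW ν)

end NMR
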